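/- arXiv:1906.09131 — 2 statements merged into one kernel-verified Lean document; each statement's English description precedes it below -/
import Mathlib

section
/- There is a computable map assigning to each tiling system 𝒞 = (C, C_H, C_V) a sentence η_𝒞 of FL²3T (the two-variable fluted fragment with three distinguished transitive relations) such that η_𝒞 is satisfiable (in a structure where the three distinguished relations are transitive) if and only if 𝒞 tiles ℕ × ℕ. -/
/- STATEMENT 13: Reduction of the ℕ×ℕ tiling problem to satisfiability of FL²3T, the
two-variable fluted fragment (without equality) with three distinguished transitive
relations. -/

namespace FlutedThreeTrans

/-- FL² formulas over countably many unary predicates (indexed by `ℕ`) and three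
distinguished binary predicates (indexed by `Fin 3`); the index `m ≤ 2` records that
the free variables form a suffix of `x₁, …, x_m`, all atoms ending at the last
variable, and only the last variable may be quantified. -/
inductive F : ℕ → Type
  | patom (p : ℕ) {m : ℕ} (h1 : 1 ≤ m) (h2 : m ≤ 2) : F m
  | batom (k : Fin 3) : F 2
  | fls {m : ℕ} (h : m ≤ 2) : F m
  | not {m : ℕ} (φ : F m) : F m
  | and {m : ℕ} (φ ψ : F m) : F m
  | or {m : ℕ} (φ ψ : F m) : F m
  | imp {m : ℕ} (φ ψ : F m) : F m
  | ex {m : ℕ} (h : m ≤ 1) (φ : F (m + 1)) : F m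
  | all {m : ℕ} (h : m ≤ 1) (φ : F (m + 1)) : F m

/-- A structure interpreting the unary predicates and the three distinguished binary
predicates. -/
structure Str (A : Type) where
  U : ℕ → A → Prop
  T : Fin 3 → A → A → Prop

def Sat {A : Type} (M : Str A) : ∀ {m : ℕ}, F m → (Fin m → A) → Prop
  | m, .patom p h1 _, v => M.U p (v ⟨m - 1, by omega⟩)
  | _, .batom k, v => M.T k (v 0) (v 1)
  | _, .fls _, _ => False
  | _, .not φ, v => ¬ Sat M φ v
  | _, .and φ ψ, v => Sat M φ v ∧ Sat M ψ v
  | _, .or φ ψ, v => Sat M φ v ∨ Sat M ψ v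
  | _, .imp φ ψ, v => Sat M φ v → Sat M ψ v
  | _, .ex _ φ, v => ∃ a : A, Sat M φ (Fin.snoc v a)
  | _, .all _ φ, v => ∀ a : A, Sat M φ (Fin.snoc v a)

/-- `φ` has a model in which all three distinguished binary relations are
transitive. -/
def Satisfiable (φ : F 0) : Prop :=
  ∃ (A : Type) (_ : Nonempty A) (M : Str A),
    (∀ k, Transitive (M.T k)) ∧ Sat M φ (fun i => i.elim0)

/-- A concrete Gödel numbering of FL²3T-formulas. -/
def encode : ∀ {m : ℕ}, F m → ℕ
  | _, .patom p _ _ => Nat.pair 0 p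
  | _, .batom k => Nat.pair 1 k.val
  | _, .fls _ => Nat.pair 2 0
  | _, .not φ => Nat.pair 3 (encode φ)
  | _, .and φ ψ => Nat.pair 4 (Nat.pair (encode φ) (encode ψ))
  | _, .or φ ψ => Nat.pair 5 (Nat.pair (encode φ) (encode ψ))
  | _, .imp φ ψ => Nat.pair 6 (Nat.pair (encode φ) (encode ψ))
  | _, .ex _ φ => Nat.pair 7 (encode φ)
  | _, .all _ φ => Nat.pair 8 (encode φ)


/-- A tiling system: a finite set of tiles `Fin n` together with horizontal and
vertical constraints. -/
structure TileSys where
  n : ℕ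
  H : Fin n → Fin n → Bool
  V : Fin n → Fin n → Bool

/-- `𝒞` tiles `ℕ × ℕ`. -/
def TileSys.TilesNat (T : TileSys) : Prop :=
  ∃ ρ : ℕ × ℕ → Fin T.n, ∀ p q : ℕ,
    T.H (ρ (p, q)) (ρ (p + 1, q)) = true ∧ T.V (ρ (p, q)) (ρ (p, q + 1)) = true

/-- A concrete Gödel numbering of tiling systems. -/
def TileSys.encode (T : TileSys) : ℕ :=
  Nat.pair T.n
    (Nat.pair (∑ i : Fin T.n, ∑ j : Fin T.n,
        if T.H i j then 2 ^ (i.val * T.n + j.val) else 0)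
      (∑ i : Fin T.n, ∑ j : Fin T.n,
        if T.V i j then 2 ^ (i.val * T.n + j.val) else 0))


/-! ### labels and geometry -/

abbrev Lb := Bool × ZMod 3 × Bool × Bool × Bool

def sg (s : Bool) : ZMod 3 := if s then 1 else -1

def c1 (l : Lb) : ZMod 3 := l.2.1

def c2 : Lb → ZMod 3
  | (false, x, _, _, true) => x
  | (_, x, s, _, _) => x + sg s

def nxt : Lb → Bool → Lb
  | (true, x, s, _, B), α => (false, x + sg s, s, α && !B, B)
  | (false, x, s, A, false), _ => (true, x + sg s, s, false, A)
  | (false, x, s, _, true), _ => (true, x, !s, true, false)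

structure Geo {A : Type} (P : Lb → A → Prop) (R : ZMod 3 → A → A → Prop) : Prop where
  start : ∃ a, P (true, 0, true, true, true) a
  next : ∀ l a, P l a → ∃ b, (R (c1 l) a b ∧ R (c2 l) a b) ∧ (P (nxt l true) b ∨ P (nxt l false) b)
  vert : ∀ x s A B A' B' a b, P (true, x, s, A, B) a → R (x + sg s) a b →
    P (false, x, !s, A', B') b → (A = A' ∧ R (x - sg s) a b)

structure TC {A : Type} (T : TileSys) (P : Lb → A → Prop) (R : ZMod 3 → A → A → Prop)
    (Q : Fin T.n → A → Prop) : Prop where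
  ex : ∀ a, ∃ i, Q i a
  hc : ∀ x s A B A' B' a b i j, P (true, x, s, A, B) a → R (x + sg s) a b →
    P (true, x - sg s, s, A', B') b → Q i a → Q j b → (if s then T.H i j else T.H j i) = true
  vc : ∀ x s A B A' B' a b i j, P (true, x, s, A, B) a → R (x + sg s) a b →
    P (true, x + sg s, !s, A', B') b → Q i a → Q j b → T.V i j = true

def par (k : ℕ) : Bool := decide (k % 2 = 0)

def sz (k : ℕ) : ℤ := if k % 2 = 0 then 1 else -1

/-- absolute horizontal position of the `i`-th element of row `k` -/
def xp (k i : ℕ) : ℤ := sz k * ((i : ℤ) - k)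

/-- label of the `i`-th element of row `k` -/
def L (k i : ℕ) : Lb :=
  (par i, ((xp k i : ℤ) : ZMod 3), par k,
    (if i % 2 = 0 then decide (i = 0) else decide (i + 1 = 2 * k)),
    (if i % 2 = 0 then decide (i = 2 * k) else decide (i = 2 * k + 1)))

lemma sg_par (k : ℕ) : sg (par k) = ((sz k : ℤ) : ZMod 3) := by
  by_cases h : k % 2 = 0 <;> simp [sg, par, sz, h]

lemma par_succ (k : ℕ) : par (k + 1) = !par k := by
  by_cases h : k % 2 = 0
  · have : (k + 1) % 2 ≠ 0 := by omega
    simp [par, h]; omega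
  · have : (k + 1) % 2 = 0 := by omega
    simp [par, h, this]; 

lemma sz_succ (k : ℕ) : sz (k + 1) = - sz k := by
  by_cases h : k % 2 = 0
  · have : (k + 1) % 2 ≠ 0 := by omega
    simp [sz, h, this]
  · have : (k + 1) % 2 = 0 := by omega
    simp [sz, h, this]

lemma xp_succ (k i : ℕ) : xp k (i + 1) = xp k i + sz k := by
  simp [xp]; ring

lemma xp_up (k i j : ℕ) (h : i + j = 2 * k + 1) : xp (k + 1) j = xp k i := by
  have : (j : ℤ) = 2 * k + 1 - i := by omega
  simp only [xp, sz_succ, this]; push_cast; ring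

lemma par_even {i : ℕ} (h : i % 2 = 0) : par i = true := by simp [par, h]
lemma par_odd {i : ℕ} (h : i % 2 = 1) : par i = false := by simp [par, h]

lemma L_even (k i : ℕ) (h : i % 2 = 0) :
    L k i = (true, ((xp k i : ℤ) : ZMod 3), par k, decide (i = 0), decide (i = 2 * k)) := by
  simp [L, h, par]

lemma L_odd (k i : ℕ) (h : i % 2 = 1) :
    L k i = (false, ((xp k i : ℤ) : ZMod 3), par k, decide (i + 1 = 2 * k),
      decide (i = 2 * k + 1)) := by
  simp [L, h, par]

lemma nxt_even (k i : ℕ) (h : i % 2 = 0) (hi : i ≤ 2 * k) (α : Bool)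
    (ha : i = 2 * k ∨ α = decide (i + 2 = 2 * k)) : nxt (L k i) α = L k (i + 1) := by
  rw [L_even k i h, L_odd k (i + 1) (by omega)]
  simp only [nxt, sg_par, xp_succ]
  push_cast
  congr 4
  · rcases ha with ha | ha
    · have : ¬ (i + 1 + 1 = 2 * k) := by omega
      simp [ha]; omega
    · by_cases h2 : i = 2 * k
      · simp [h2]; omega
      · simp [h2, ha]

lemma nxt_odd (k i : ℕ) (h : i % 2 = 1) (hi : i < 2 * k + 1) (α : Bool) :
    nxt (L k i) α = L k (i + 1) := by
  rw [L_odd k i h, L_even k (i + 1) (by omega)]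
  have h2 : ¬ (i = 2 * k + 1) := by omega
  simp only [h2, decide_false, nxt, sg_par, xp_succ]
  push_cast
  congr 4

lemma nxt_turn (k : ℕ) (α : Bool) : nxt (L k (2 * k + 1)) α = L (k + 1) 0 := by
  rw [L_odd k _ (by omega), L_even (k + 1) 0 (by omega)]
  simp only [decide_true, nxt, par_succ]
  rw [xp_up k (2 * k + 1) 0 (by omega)]
  congr 4

lemma c1_L (k i : ℕ) : c1 (L k i) = ((xp k i : ℤ) : ZMod 3) := rfl

lemma c2_L (k i : ℕ) (h : i < 2 * k + 1) : c2 (L k i) = ((xp k (i + 1) : ℤ) : ZMod 3) := by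
  rw [xp_succ]; push_cast; rw [← sg_par]
  rcases Nat.mod_two_eq_zero_or_one i with h2 | h2
  · rw [L_even k i h2]; rfl
  · have h3 : ¬ (i = 2 * k + 1) := by omega
    rw [L_odd k i h2]; simp [h3, c2]

/-! ### soundness -/

lemma rows {A : Type} {P : Lb → A → Prop} {R : ZMod 3 → A → A → Prop}
    (hR : ∀ c, Transitive (R c)) (hG : Geo P R) :
    ∃ e : ℕ → ℕ → A, (∀ k i, i ≤ 2 * k + 1 → P (L k i) (e k i)) ∧
      (∀ k i, i % 2 = 0 → i + 2 ≤ 2 * k → R (xp k (i+1) : ℤ) (e k i) (e k (i + 2))) ∧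
      (∀ k i j, i % 2 = 0 → i + j = 2 * k → R (xp k (i+1) : ℤ) (e k i) (e (k + 1) j)) := by
  classical
  obtain ⟨a0, ha0⟩ := hG.start
  have step : ∀ s : {p : Lb × A // P p.1 p.2}, ∃ t : {p : Lb × A // P p.1 p.2},
      (R (c1 s.1.1) s.1.2 t.1.2 ∧ R (c2 s.1.1) s.1.2 t.1.2) ∧ ∃ α, t.1.1 = nxt s.1.1 α := by
    rintro ⟨⟨l, a⟩, h⟩
    obtain ⟨b, hb, h1 | h1⟩ := hG.next l a h
    · exact ⟨⟨(_, b), h1⟩, hb, _, rfl⟩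
    · exact ⟨⟨(_, b), h1⟩, hb, _, rfl⟩
  choose f hf hα using step
  let s : ℕ → {p : Lb × A // P p.1 p.2} := fun n => f^[n] ⟨(_, a0), ha0⟩
  have hs : ∀ n, s (n + 1) = f (s n) := fun n => Function.iterate_succ_apply' f n _
  let lab : ℕ → ℕ → Lb := fun k i => (s (k * (k + 1) + i)).1.1
  let e : ℕ → ℕ → A := fun k i => (s (k * (k + 1) + i)).1.2
  have hP : ∀ k i, P (lab k i) (e k i) := fun k i => (s (k * (k + 1) + i)).2
  have e1 : ∀ k i, R (c1 (lab k i)) (e k i) (e k (i + 1)) := by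
    intro k i
    have := (hf (s (k * (k + 1) + i))).1
    rw [← hs] at this; exact this
  have e2 : ∀ k i, R (c2 (lab k i)) (e k i) (e k (i + 1)) := by
    intro k i
    have := (hf (s (k * (k + 1) + i))).2
    rw [← hs] at this; exact this
  have e3 : ∀ k i, ∃ α, lab k (i + 1) = nxt (lab k i) α := by
    intro k i
    have := (hα (s (k * (k + 1) + i)))
    rw [← hs] at this; exact this
  have ew : ∀ k, e k (2 * k + 1 + 1) = e (k + 1) 0 := by
    intro k
    have : k * (k + 1) + (2 * k + 1 + 1) = (k + 1) * (k + 1 + 1) + 0 := by ring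
    simp only [e]; rw [this]
  have lw : ∀ k, lab k (2 * k + 1 + 1) = lab (k + 1) 0 := by
    intro k
    have : k * (k + 1) + (2 * k + 1 + 1) = (k + 1) * (k + 1 + 1) + 0 := by ring
    simp only [lab]; rw [this]
  have lodd : ∀ k i, i % 2 = 1 → i < 2 * k + 1 → lab k i = L k i → lab k (i+1) = L k (i+1) := by
    intro k i h h2 h3
    obtain ⟨α, h4⟩ := e3 k i
    rw [h4, h3, nxt_odd k i h h2]
  have llast : ∀ k, lab k (2*k) = L k (2*k) → lab k (2*k+1) = L k (2*k+1) := by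
    intro k h3
    obtain ⟨α, h4⟩ := e3 k (2*k)
    rw [h4, h3, nxt_even k (2*k) (by omega) (by omega) α (Or.inl rfl)]
  have lturn : ∀ k, lab k (2*k+1) = L k (2*k+1) → lab (k+1) 0 = L (k+1) 0 := by
    intro k h3
    obtain ⟨α, h4⟩ := e3 k (2*k+1)
    rw [← lw, h4, h3, nxt_turn]
  -- vertical step
  have vstep : ∀ k i j, i % 2 = 0 → i + j = 2 * k → lab k i = L k i →
      lab (k+1) j = L (k+1) j → R (xp k (i+1) : ℤ) (e k i) (e (k+1) j) →
      lab (k+1) (j+1) = L (k+1) (j+1) ∧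
        R ((xp k i - sz k : ℤ)) (e k i) (e (k+1) (j+1)) := by
    intro k i j hi hij h1 h2 h3
    have hx : xp (k+1) j = xp k (i+1) := xp_up k (i+1) j (by omega)
    have h4 := e1 (k+1) j
    rw [h2, c1_L, hx] at h4
    have h5 := hR _ h3 h4
    obtain ⟨α, h6⟩ := e3 (k+1) j
    have hp1 := hP k i
    have hp2 := hP (k+1) (j+1)
    rw [h1, L_even k i hi] at hp1
    have hj : ¬ (j = 2 * (k + 1)) := by omega
    rw [h6, h2, L_even (k+1) j (by omega)] at hp2
    simp only [nxt, hj, decide_false, Bool.not_false, Bool.and_true, par_succ, hx] at hp2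
    have hx2 : ((xp k (i+1) : ℤ) : ZMod 3) + sg (!par k) = ((xp k i : ℤ) : ZMod 3) := by
      rw [xp_succ, ← par_succ, sg_par, sz_succ]; push_cast; ring
    rw [hx2] at hp2
    rw [xp_succ] at h5
    push_cast at h5
    rw [← sg_par] at h5
    obtain ⟨h7, h8⟩ := hG.vert _ _ _ _ _ _ _ _ hp1 h5 hp2
    constructor
    · rw [h6, h2]
      apply nxt_even _ _ (by omega) (by omega)
      right
      rw [← h7]
      apply decide_eq_decide.2
      omega
    · push_cast; rw [← sg_par]; exact h8
  have hrow2 : ∀ k i, i % 2 = 0 → i + 2 ≤ 2 * k + 2 → lab k i = L k i → lab k (i+1) = L k (i+1) →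
      R (xp k (i+1) : ℤ) (e k i) (e k (i + 2)) := by
    intro k i hi h1 h2 h3
    have h4 := e2 k i
    have h5 := e1 k (i+1)
    rw [h2, c2_L k i (by omega)] at h4
    rw [h3, c1_L] at h5
    exact hR _ h4 h5
  have ladder : ∀ k, (∀ i, i ≤ 2 * k + 1 → lab k i = L k i) → ∀ m, m ≤ k →
      (lab (k+1) (2*m) = L (k+1) (2*m) ∧ lab (k+1) (2*m+1) = L (k+1) (2*m+1) ∧
        R (xp k (2*(k-m)+1) : ℤ) (e k (2*(k-m))) (e (k+1) (2*m)) ∧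
        R ((xp k (2*(k-m)) - sz k : ℤ)) (e k (2*(k-m))) (e (k+1) (2*m+1))) := by
    intro k hk m
    induction m with
    | zero =>
      intro _
      have h0 := lturn k (hk _ le_rfl)
      have h1 : R (xp k (2*k+1) : ℤ) (e k (2*k)) (e (k+1) 0) := by
        rw [← ew]
        exact hrow2 k (2*k) (by omega) (by omega) (hk _ (by omega)) (hk _ (by omega))
      have h2 := vstep k (2*k) 0 (by omega) (by omega) (hk _ (by omega)) h0 h1
      exact ⟨h0, h2.1, h1, h2.2⟩
    | succ m ih =>
      intro hm
      obtain ⟨_, i2, i3, i4⟩ := ih (by omega)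
      obtain ⟨i, hi, hi2⟩ : ∃ i, i = 2 * (k - (m+1)) ∧ 2 * (k - m) = i + 2 := ⟨_, rfl, by omega⟩
      rw [← hi]
      rw [hi2] at i3 i4
      have hA := hrow2 k i (by omega) (by omega) (hk _ (by omega)) (hk _ (by omega))
      have hB : R (xp k (i+1) : ℤ) (e k (i+2)) (e (k+1) (2*m+1)) := by
        rw [show i + 2 = (i + 1) + 1 by ring, xp_succ k (i+1), add_sub_cancel_right] at i4
        exact i4
      have hC := e2 (k+1) (2*m+1)
      rw [i2, c2_L _ _ (by omega), xp_up k (i+1) (2*m+1+1) (by omega)] at hC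
      have hD := hR _ (hR _ hA hB) hC
      have hl := lodd (k+1) (2*m+1) (by omega) (by omega) i2
      have h2 := vstep k i (2*m+1+1) (by omega) (by omega) (hk _ (by omega)) hl hD
      exact ⟨hl, h2.1, hD, h2.2⟩
  have hall : ∀ k i, i ≤ 2 * k + 1 → lab k i = L k i := by
    intro k
    induction k with
    | zero =>
      have h0 : lab 0 0 = L 0 0 := by
        simp only [lab, s]
        simp [L, xp, par]
      intro i hi
      rcases Nat.le_one_iff_eq_zero_or_eq_one.1 hi with rfl | rfl
      · exact h0
      · exact llast 0 h0
    | succ k ih =>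
      have hl := ladder k ih
      have h1 : lab (k+1) (2*(k+1)) = L (k+1) (2*(k+1)) :=
        lodd (k+1) (2*k+1) (by omega) (by omega) (hl k le_rfl).2.1
      intro i hi
      by_cases h2 : i ≤ 2 * k + 1
      · rcases Nat.even_or_odd' i with ⟨m, rfl | rfl⟩
        · exact (hl m (by omega)).1
        · exact (hl m (by omega)).2.1
      · have : i = 2 * (k+1) ∨ i = 2 * (k+1) + 1 := by omega
        rcases this with rfl | rfl
        · exact h1
        · exact llast _ h1
  refine ⟨e, ?_, ?_, ?_⟩
  · intro k i hi
    rw [← hall k i hi]; exact hP k i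
  · intro k i hi h
    exact hrow2 k i hi (by omega) (hall _ _ (by omega)) (hall _ _ (by omega))
  · intro k i j hi hij
    have := (ladder k (hall k) (j/2) (by omega)).2.2.1
    rw [show 2 * (k - j/2) = i by omega, show 2 * (j/2) = j by omega] at this
    exact this

lemma compact {n : ℕ} (H V : Fin n → Fin n → Bool) (f : ℕ → ℤ → ℕ → Fin n)
    (hf : ∀ x q, ∀ᶠ N in Filter.atTop, H (f N x q) (f N (x+1) q) = true ∧
      V (f N x q) (f N x (q+1)) = true) :
    ∃ ρ : ℤ → ℕ → Fin n, ∀ x q, H (ρ x q) (ρ (x+1) q) = true ∧ V (ρ x q) (ρ x (q+1)) = true := by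
  have key : ∀ x q, ∃ c, ∀ᶠ N in (Filter.hyperfilter ℕ : Filter ℕ), f N x q = c := by
    intro x q
    have h : (⋃ c ∈ (Set.univ : Set (Fin n)), {N | f N x q = c}) ∈ Filter.hyperfilter ℕ := by
      have h2 : (⋃ c ∈ (Set.univ : Set (Fin n)), {N | f N x q = c}) = Set.univ := by
        ext N; simp
      rw [h2]; exact Filter.univ_mem
    obtain ⟨c, _, hc⟩ := (Ultrafilter.finite_biUnion_mem_iff Set.finite_univ).1 h
    exact ⟨c, hc⟩
  choose ρ hρ using key
  refine ⟨ρ, fun x q => ?_⟩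
  have h := (hf x q).filter_mono Nat.hyperfilter_le_atTop
  obtain ⟨N, h1, h2, h3, h4⟩ := (h.and ((hρ x q).and ((hρ (x+1) q).and (hρ x (q+1))))).exists
  rw [h2, h3, h4] at h1; exact h1

lemma sound {A : Type} (T : TileSys) {P : Lb → A → Prop} {R : ZMod 3 → A → A → Prop}
    {Q : Fin T.n → A → Prop} (hR : ∀ c, Transitive (R c)) (hG : Geo P R) (hT : TC T P R Q) :
    T.TilesNat := by
  obtain ⟨e, hP, hH, hV⟩ := rows hR hG
  choose t ht using hT.ex
  have H1 : ∀ k i, i % 2 = 0 → i + 2 ≤ 2 * k →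
      (if par k then T.H (t (e k i)) (t (e k (i+2))) else T.H (t (e k (i+2))) (t (e k i))) = true := by
    intro k i hi hk
    have h1 := hP k i (by omega)
    have h2 := hP k (i+2) (by omega)
    have h3 := hH k i hi hk
    rw [L_even _ _ hi] at h1
    rw [L_even _ _ (by omega)] at h2
    rw [xp_succ] at h3
    push_cast at h3
    rw [← sg_par] at h3
    have h4 : ((xp k (i+2) : ℤ) : ZMod 3) = (xp k i : ℤ) - sg (par k) := by
      rw [show i + 2 = i + 1 + 1 by ring, xp_succ, xp_succ, sg_par]
      push_cast
      have : (3 : ZMod 3) = 0 := rfl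
      linear_combination ((sz k : ℤ) : ZMod 3) * this
    rw [h4] at h2
    exact hT.hc _ _ _ _ _ _ _ _ _ _ h1 h3 h2 (ht _) (ht _)
  have V1 : ∀ k i j, i % 2 = 0 → i + j = 2 * k → T.V (t (e k i)) (t (e (k+1) j)) = true := by
    intro k i j hi hk
    have h1 := hP k i (by omega)
    have h2 := hP (k+1) j (by omega)
    have h3 := hV k i j hi hk
    rw [L_even _ _ hi] at h1
    rw [L_even _ _ (by omega), xp_up k (i+1) j (by omega), xp_succ, par_succ] at h2
    rw [xp_succ] at h3
    push_cast at h3 h2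
    rw [← sg_par] at h3 h2
    exact hT.vc _ _ _ _ _ _ _ _ _ _ h1 h3 h2 (ht _) (ht _)
  let ix : ℕ → ℤ → ℕ := fun k x => if k % 2 = 0 then (2 * x + k).toNat else (k - 1 - 2 * x).toNat
  obtain ⟨ρ, hρ⟩ := compact T.H T.V (fun N x q => t (e (2*N+q) (ix (2*N+q) x))) (by
    intro x q
    filter_upwards [Filter.eventually_ge_atTop (x.natAbs + 2)] with N hN
    obtain ⟨k, hk⟩ : ∃ k, k = 2 * N + q := ⟨_, rfl⟩
    rw [← add_assoc, ← hk]
    by_cases hp : k % 2 = 0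
    · have hp' : (k + 1) % 2 ≠ 0 := by omega
      constructor
      · have := H1 k (ix k x) (by simp only [ix, if_pos hp]; omega)
          (by simp only [ix, if_pos hp]; omega)
        rw [par_even hp] at this
        have h2 : ix k (x+1) = ix k x + 2 := by simp only [ix, if_pos hp]; omega
        rw [h2]; simpa using this
      · apply V1
        · simp only [ix, if_pos hp]; omega
        · simp only [ix, if_pos hp, if_neg hp']; omega
    · have hp' : (k + 1) % 2 = 0 := by omega
      constructor
      · have := H1 k (ix k (x+1)) (by simp only [ix, if_neg hp]; omega)
          (by simp only [ix, if_neg hp]; omega)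
        rw [par_odd (by omega)] at this
        have h2 : ix k x = ix k (x+1) + 2 := by simp only [ix, if_neg hp]; omega
        rw [h2]; simpa using this
      · apply V1
        · simp only [ix, if_neg hp]; omega
        · simp only [ix, if_neg hp, if_pos hp']; omega)
  refine ⟨fun p => ρ p.1 p.2, fun p q => ?_⟩
  have := hρ p q
  simpa using this

/-! ### completeness: the intended model -/

def fy (c : ZMod 3) (x : ℤ) : ℤ := x - 1 + (((c.val : ℤ) - (x - 1)) % 3)

def fs (y : ℤ) (k : ℕ) : ℤ := (k : ℤ) - (y + k + 1) % 2

def MR (c : ZMod 3) (a b : ℕ × ℕ) : Prop :=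
  (fy c (xp a.1 a.2) = fy c (xp b.1 b.2) ∧
    fs (fy c (xp a.1 a.2)) a.1 = fs (fy c (xp b.1 b.2)) b.1) ∧
  (a.1 < b.1 ∨ (a.1 = b.1 ∧ a.2 < b.2))

def MP (l : Lb) (a : ℕ × ℕ) : Prop := a.2 ≤ 2 * a.1 + 1 ∧ L a.1 a.2 = l

lemma MR_trans (c : ZMod 3) : Transitive (MR c) := by
  rintro a b d ⟨⟨h1, h2⟩, h3⟩ ⟨⟨h4, h5⟩, h6⟩
  refine ⟨⟨h1.trans h4, h2.trans h5⟩, ?_⟩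
  omega

lemma fy_cast (z x : ℤ) : fy (z : ZMod 3) x = x - 1 + ((z - (x - 1)) % 3) := by
  have : ((z : ZMod 3).val : ℤ) = z % 3 := by
    have := ZMod.val_intCast (n := 3) z
    simpa using this
  rw [fy, this]; omega

lemma zcast_eq {a b : ℤ} (h : (a : ZMod 3) = (b : ZMod 3)) : a % 3 = b % 3 := by
  have := (ZMod.intCast_eq_intCast_iff a b 3).1 h
  exact this

lemma sz_cases (k : ℕ) : (k % 2 = 0 ∧ sz k = 1) ∨ (k % 2 = 1 ∧ sz k = -1) := by
  rcases Nat.mod_two_eq_zero_or_one k with h | h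
  · left; simp [sz, h]
  · right; simp [sz, h]

lemma par_inj {a b : ℕ} (h : par a = par b) : a % 2 = b % 2 := by
  have := decide_eq_decide.1 h
  omega

lemma MR_cast (z : ℤ) (k i k' i' : ℕ) : MR (z : ZMod 3) (k, i) (k', i') ↔
    ((xp k i - 1 + ((z - (xp k i - 1)) % 3) = xp k' i' - 1 + ((z - (xp k' i' - 1)) % 3) ∧
     (k : ℤ) - (xp k i - 1 + ((z - (xp k i - 1)) % 3) + k + 1) % 2 =
       (k' : ℤ) - (xp k' i' - 1 + ((z - (xp k' i' - 1)) % 3) + k' + 1) % 2) ∧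
      (k < k' ∨ (k = k' ∧ i < i'))) := by
  simp only [MR, fy_cast, fs]

lemma xp_mod (k i : ℕ) : (xp k i + k) % 2 = (i : ℤ) % 2 := by
  rcases sz_cases k with ⟨h, h'⟩ | ⟨h, h'⟩ <;> rw [xp, h'] <;> omega

lemma MP_start : MP (true, 0, true, true, true) (0, 0) := by
  refine ⟨by simp, ?_⟩
  simp [L, xp, par]

lemma model_geo : Geo MP MR where
  start := ⟨_, MP_start⟩
  next := by
    rintro l ⟨k, i⟩ ⟨hi, rfl⟩
    simp only at hi ⊢
    by_cases h : i < 2 * k + 1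
    · refine ⟨(k, i+1), ⟨?_, ?_⟩, ?_⟩
      · rw [c1_L, MR_cast, xp_succ]
        rcases sz_cases k with ⟨h, h'⟩ | ⟨h, h'⟩ <;> rw [h'] <;> omega
      · rw [c2_L k i h, MR_cast, xp_succ]
        rcases sz_cases k with ⟨h, h'⟩ | ⟨h, h'⟩ <;> rw [h'] <;> omega
      · have : ∃ α, nxt (L k i) α = L k (i+1) := by
          rcases Nat.mod_two_eq_zero_or_one i with h2 | h2
          · exact ⟨_, nxt_even k i h2 (by omega) _ (Or.inr rfl)⟩
          · exact ⟨true, nxt_odd k i h2 h _⟩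
        obtain ⟨α, hα⟩ := this
        cases α
        · exact Or.inr ⟨by simp; omega, hα.symm⟩
        · exact Or.inl ⟨by simp; omega, hα.symm⟩
    · obtain rfl : i = 2 * k + 1 := by omega
      have hx := xp_up k (2*k+1) 0 (by omega)
      have hm := xp_mod k (2*k+1)
      have hr : MR ((xp k (2*k+1) : ℤ) : ZMod 3) (k, 2*k+1) (k+1, 0) := by
        rw [MR_cast, hx]
        omega
      refine ⟨(k+1, 0), ⟨?_, ?_⟩, Or.inl ⟨by simp, (nxt_turn k true).symm⟩⟩
      · rw [c1_L]; exact hr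
      · have : c2 (L k (2*k+1)) = ((xp k (2*k+1) : ℤ) : ZMod 3) := by
          rw [L_odd k _ (by omega)]; simp [c2]
        rw [this]; exact hr
  vert := by
    rintro x s A B A' B' ⟨k, i⟩ ⟨k', i'⟩ ⟨hi, h1⟩ h2 ⟨hi', h3⟩
    simp only at hi h1 hi' h3
    have hp : i % 2 = 0 := by
      by_contra h
      rw [L_odd k i (by omega)] at h1
      simp at h1
    have hp' : i' % 2 = 1 := by
      by_contra h
      rw [L_even k' i' (by omega)] at h3
      simp at h3
    rw [L_even k i hp] at h1
    rw [L_odd k' i' hp'] at h3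
    simp only [Prod.mk.injEq] at h1 h3
    obtain ⟨-, rfl, rfl, rfl, rfl⟩ := h1
    obtain ⟨-, g1, g2, rfl, rfl⟩ := h3
    have g3 := zcast_eq g1
    rw [← par_succ] at g2
    have g4 := par_inj g2
    rw [sg_par, ← Int.cast_add, MR_cast] at h2
    have m1 := xp_mod k i
    have m2 := xp_mod k' i'
    have hk : k' = k + 1 ∧ xp k' i' = xp k i := by
      rcases sz_cases k with ⟨h, h'⟩ | ⟨h, h'⟩ <;> rw [h'] at h2 <;> omega
    obtain ⟨rfl, hx⟩ := hk
    constructor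
    · apply decide_eq_decide.2
      simp only [xp, sz_succ] at hx
      rcases sz_cases k with ⟨h, h'⟩ | ⟨h, h'⟩ <;> rw [h'] at hx <;> omega
    · rw [sg_par, ← Int.cast_sub, MR_cast, hx]
      rcases sz_cases k with ⟨h, h'⟩ | ⟨h, h'⟩ <;> rw [h'] <;> omega

lemma tiles_int (T : TileSys) (h : T.TilesNat) : ∃ ρ : ℤ → ℕ → Fin T.n,
    ∀ x q, T.H (ρ x q) (ρ (x+1) q) = true ∧ T.V (ρ x q) (ρ x (q+1)) = true := by
  obtain ⟨ρ, hρ⟩ := h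
  apply compact T.H T.V (fun N x q => ρ ((x + N).toNat, q))
  intro x q
  filter_upwards [Filter.eventually_ge_atTop x.natAbs] with N hN
  have : (x + 1 + N).toNat = (x + N).toNat + 1 := by omega
  rw [this]
  exact hρ _ _

lemma model_tile (T : TileSys) (ρ : ℤ → ℕ → Fin T.n)
    (hρ : ∀ x q, T.H (ρ x q) (ρ (x+1) q) = true ∧ T.V (ρ x q) (ρ x (q+1)) = true) :
    TC T MP MR (fun i a => ρ (xp a.1 a.2 / 2) a.1 = i) where
  ex := fun a => ⟨_, rfl⟩
  hc := by
    rintro x s A B A' B' ⟨k, i⟩ ⟨k', i'⟩ t t' ⟨hi, h1⟩ h2 ⟨hi', h3⟩ rfl rfl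
    simp only at hi h1 hi' h3
    have hp : i % 2 = 0 := by
      by_contra h
      rw [L_odd k i (by omega)] at h1
      simp at h1
    have hp' : i' % 2 = 0 := by
      by_contra h
      rw [L_odd k' i' (by omega)] at h3
      simp at h3
    rw [L_even k i hp] at h1
    rw [L_even k' i' hp'] at h3
    simp only [Prod.mk.injEq] at h1 h3
    obtain ⟨-, rfl, rfl, rfl, rfl⟩ := h1
    obtain ⟨-, g1, g2, rfl, rfl⟩ := h3
    rw [sg_par, ← Int.cast_sub] at g1
    have g3 := zcast_eq g1
    have g4 := par_inj g2
    rw [sg_par, ← Int.cast_add, MR_cast] at h2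
    have m1 := xp_mod k i
    have m2 := xp_mod k' i'
    have hk : k' = k ∧ xp k' i' = xp k i + 2 * sz k := by
      rcases sz_cases k with ⟨h, h'⟩ | ⟨h, h'⟩ <;> rw [h'] at h2 g3 ⊢ <;> omega
    obtain ⟨rfl, hx⟩ := hk
    simp only
    rcases sz_cases k' with ⟨h, h'⟩ | ⟨h, h'⟩
    · rw [par_even h, hx, h', show (xp k' i + 2 * 1) / 2 = xp k' i / 2 + 1 by omega]
      simpa using (hρ (xp k' i / 2) k').1
    · rw [par_odd h]
      have := (hρ (xp k' i' / 2) k').1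
      rw [show xp k' i' / 2 + 1 = xp k' i / 2 by rw [hx, h']; omega] at this
      simpa using this
  vc := by
    rintro x s A B A' B' ⟨k, i⟩ ⟨k', i'⟩ t t' ⟨hi, h1⟩ h2 ⟨hi', h3⟩ rfl rfl
    simp only at hi h1 hi' h3
    have hp : i % 2 = 0 := by
      by_contra h
      rw [L_odd k i (by omega)] at h1
      simp at h1
    have hp' : i' % 2 = 0 := by
      by_contra h
      rw [L_odd k' i' (by omega)] at h3
      simp at h3
    rw [L_even k i hp] at h1
    rw [L_even k' i' hp'] at h3
    simp only [Prod.mk.injEq] at h1 h3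
    obtain ⟨-, rfl, rfl, rfl, rfl⟩ := h1
    obtain ⟨-, g1, g2, rfl, rfl⟩ := h3
    rw [sg_par, ← Int.cast_add] at g1
    have g3 := zcast_eq g1
    rw [← par_succ] at g2
    have g4 := par_inj g2
    rw [sg_par, ← Int.cast_add, MR_cast] at h2
    have m1 := xp_mod k i
    have m2 := xp_mod k' i'
    have hk : k' = k + 1 ∧ xp k' i' / 2 = xp k i / 2 := by
      rcases sz_cases k with ⟨h, h'⟩ | ⟨h, h'⟩ <;> rw [h'] at h2 g3 <;> omega
    obtain ⟨rfl, hx⟩ := hk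
    simp only
    rw [hx]
    exact (hρ _ _).2

/-! ### the formula -/

def tru : F 0 := .not (.fls (by omega))

def conjL : List (F 0) → F 0
  | [] => tru
  | φ :: l => .and φ (conjL l)

def andN (f : ℕ → F 0) : ℕ → F 0
  | 0 => tru
  | n + 1 => .and (andN f n) (f n)

def orN : ℕ → F 1
  | 0 => .fls (by omega)
  | n + 1 => .or (orN n) (.patom (2 * n + 1) (by omega) (by omega))

noncomputable def code (l : Lb) : ℕ := 2 * (Fintype.equivFin Lb l).val

lemma code_inj {l l' : Lb} (h : code l = code l') : l = l' := by
  apply (Fintype.equivFin Lb).injective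
  apply Fin.ext
  simp only [code] at h
  omega

abbrev Ix := ZMod 3 × Bool × Bool × Bool × Bool × Bool

def p1 (p : ℕ) : F 1 := .patom p (by omega) (by omega)
def p2 (p : ℕ) : F 2 := .patom p (by omega) (by omega)
def al0 (φ : F 1) : F 0 := .all (by omega) φ
def al1 (φ : F 2) : F 1 := .all (by omega) φ
def ex1 (φ : F 2) : F 1 := .ex (by omega) φ

noncomputable def nextF (l : Lb) : F 0 :=
  al0 (.imp (p1 (code l)) (ex1 (.and (.and (.batom (c1 l)) (.batom (c2 l)))
    (.or (p2 (code (nxt l true))) (p2 (code (nxt l false)))))))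

noncomputable def vertF : Ix → F 0
  | (x, s, A, B, A', B') =>
    al0 (.imp (p1 (code (true, x, s, A, B))) (al1 (.imp (.batom (x + sg s))
      (.imp (p2 (code (false, x, !s, A', B')))
        (if A = A' then .batom (x - sg s) else .fls (by omega))))))

noncomputable def geoF : F 0 :=
  .and (.ex (by omega) (p1 (code (true, 0, true, true, true))))
    (.and (conjL ((Finset.univ : Finset Lb).toList.map nextF))
      (conjL ((Finset.univ : Finset Ix).toList.map vertF)))

noncomputable def forb (l : Lb) (c : ZMod 3) (l' : Lb) (i j : ℕ) : F 0 :=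
  al0 (.imp (p1 (code l)) (.imp (p1 (2 * i + 1)) (al1 (.imp (.batom c)
    (.imp (p2 (code l')) (.not (p2 (2 * j + 1))))))))

noncomputable def hG (i j : ℕ) : Ix → F 0
  | (x, s, A, B, A', B') =>
    if s then forb (true, x, s, A, B) (x + sg s) (true, x - sg s, s, A', B') i j
    else forb (true, x, s, A, B) (x + sg s) (true, x - sg s, s, A', B') j i

noncomputable def vG (i j : ℕ) : Ix → F 0
  | (x, s, A, B, A', B') =>
    forb (true, x, s, A, B) (x + sg s) (true, x + sg s, !s, A', B') i j

noncomputable def hF (i j : ℕ) : F 0 := conjL ((Finset.univ : Finset Ix).toList.map (hG i j))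
noncomputable def vF (i j : ℕ) : F 0 := conjL ((Finset.univ : Finset Ix).toList.map (vG i j))

noncomputable def pairF (n h v i j : ℕ) : F 0 :=
  .and (if h / 2 ^ (i * n + j) % 2 = 1 then tru else hF i j)
    (if v / 2 ^ (i * n + j) % 2 = 1 then tru else vF i j)

noncomputable def eta (n h v : ℕ) : F 0 :=
  .and geoF (.and (al0 (orN n)) (andN (fun i => andN (fun j => pairF n h v i j) n) n))

/-! ### semantics of the formula -/

section sem
variable {A : Type} (M : Str A)

lemma sat_tru (v : Fin 0 → A) : Sat M tru v := by simp [tru, Sat]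

lemma sat_conjL (l : List (F 0)) (v : Fin 0 → A) : Sat M (conjL l) v ↔ ∀ φ ∈ l, Sat M φ v := by
  induction l with
  | nil => simp [conjL, sat_tru]
  | cons a l ih => simp [conjL, Sat, ih]

lemma sat_andN (f : ℕ → F 0) (n : ℕ) (v : Fin 0 → A) :
    Sat M (andN f n) v ↔ ∀ i < n, Sat M (f i) v := by
  induction n with
  | zero => simp [andN, sat_tru]
  | succ n ih =>
    simp only [andN, Sat, ih]
    constructor
    · rintro ⟨h1, h2⟩ i hi
      rcases Nat.lt_succ_iff_lt_or_eq.1 hi with h | rfl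
      · exact h1 i h
      · exact h2
    · intro h
      exact ⟨fun i hi => h i (by omega), h n (by omega)⟩

lemma sat_orN (n : ℕ) (v : Fin 1 → A) : Sat M (orN n) v ↔ ∃ i < n, M.U (2 * i + 1) (v 0) := by
  induction n with
  | zero => simp [orN, Sat]
  | succ n ih =>
    simp only [orN, Sat, ih]
    constructor
    · rintro (⟨i, hi, h⟩ | h)
      · exact ⟨i, by omega, h⟩
      · exact ⟨n, by omega, h⟩
    · rintro ⟨i, hi, h⟩
      rcases Nat.lt_succ_iff_lt_or_eq.1 hi with h' | rfl
      · exact Or.inl ⟨i, h', h⟩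
      · exact Or.inr h

lemma sat_al0 (φ : F 1) (v : Fin 0 → A) : Sat M (al0 φ) v ↔ ∀ a, Sat M φ (fun _ => a) := by
  simp only [al0, Sat]
  refine forall_congr' fun a => ?_
  have : (Fin.snoc v a : Fin 1 → A) = fun _ => a := by
    funext i; fin_cases i; rfl
  rw [← this]

lemma sat_al1 (φ : F 2) (a : A) : Sat M (al1 φ) (fun _ => a) ↔ ∀ b, Sat M φ ![a, b] := by
  simp only [al1, Sat]
  refine forall_congr' fun b => ?_
  have : (Fin.snoc (fun _ => a) b : Fin 2 → A) = ![a, b] := by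
    funext i; fin_cases i <;> rfl
  rw [← this]

lemma sat_ex1 (φ : F 2) (a : A) : Sat M (ex1 φ) (fun _ => a) ↔ ∃ b, Sat M φ ![a, b] := by
  simp only [ex1, Sat]
  refine exists_congr fun b => ?_
  have : (Fin.snoc (fun _ => a) b : Fin 2 → A) = ![a, b] := by
    funext i; fin_cases i <;> rfl
  rw [← this]

lemma sat_p1 (p : ℕ) (a : A) : Sat M (p1 p) (fun _ => a) ↔ M.U p a := Iff.rfl
lemma sat_p2 (p : ℕ) (a b : A) : Sat M (p2 p) ![a, b] ↔ M.U p b := Iff.rfl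
lemma sat_b (c : Fin 3) (a b : A) : Sat M (.batom c) ![a, b] ↔ M.T c a b := Iff.rfl

lemma sat_nextF (l : Lb) (v : Fin 0 → A) : Sat M (nextF l) v ↔
    ∀ a, M.U (code l) a → ∃ b, (M.T (c1 l) a b ∧ M.T (c2 l) a b) ∧
      (M.U (code (nxt l true)) b ∨ M.U (code (nxt l false)) b) := by
  simp only [nextF, sat_al0, Sat, sat_ex1, sat_p1, sat_p2]
  rfl

lemma sat_vertF (x s P B P' B') (v : Fin 0 → A) : Sat M (vertF (x, s, P, B, P', B')) v ↔
    ∀ a, M.U (code (true, x, s, P, B)) a → ∀ b, M.T (x + sg s) a b →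
      M.U (code (false, x, !s, P', B')) b → (P = P' ∧ M.T (x - sg s) a b) := by
  simp only [vertF, sat_al0, Sat, sat_al1, sat_p1, sat_p2]
  by_cases h : P = P'
  · simp only [h, if_true, true_and]; rfl
  · simp only [h, if_false, false_and]; rfl

lemma sat_forb (l c l' i j) (v : Fin 0 → A) : Sat M (forb l c l' i j) v ↔
    ∀ a, M.U (code l) a → M.U (2 * i + 1) a → ∀ b, M.T c a b → M.U (code l') b →
      ¬ M.U (2 * j + 1) b := by
  simp only [forb, sat_al0, Sat, sat_al1, sat_p1, sat_p2]
  rfl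

lemma sat_geo (v : Fin 0 → A) : Sat M geoF v ↔
    Geo (fun l a => M.U (code l) a) (fun c a b => M.T c a b) := by
  have h0 : Sat M (.ex (by omega) (p1 (code (true, 0, true, true, true)))) v ↔
      ∃ a, M.U (code (true, 0, true, true, true)) a := Iff.rfl
  simp only [geoF, Sat, sat_conjL, List.mem_map, Finset.mem_toList, Finset.mem_univ, true_and,
    forall_exists_index, forall_apply_eq_imp_iff]
  constructor
  · rintro ⟨h1, h2, h3⟩
    refine ⟨h1, fun l => (sat_nextF M l v).1 (h2 l), ?_⟩
    intro x s P B P' B' a b ha hab hb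
    exact (sat_vertF M x s P B P' B' v).1 (h3 _) a ha b hab hb
  · rintro ⟨h1, h2, h3⟩
    refine ⟨h1, fun l => (sat_nextF M l v).2 (h2 l), ?_⟩
    rintro ⟨x, s, P, B, P', B'⟩
    exact (sat_vertF M x s P B P' B' v).2 fun a ha b hab hb => h3 _ _ _ _ _ _ _ _ ha hab hb

lemma sat_tile (T : TileSys) (h w : ℕ)
    (hh : ∀ i j : Fin T.n, h / 2 ^ (i.val * T.n + j.val) % 2 = 1 ↔ T.H i j = true)
    (hw : ∀ i j : Fin T.n, w / 2 ^ (i.val * T.n + j.val) % 2 = 1 ↔ T.V i j = true)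
    (v : Fin 0 → A) :
    Sat M (.and (al0 (orN T.n)) (andN (fun i => andN (fun j => pairF T.n h w i j) T.n) T.n)) v ↔
    TC T (fun l a => M.U (code l) a) (fun c a b => M.T c a b)
      (fun i a => M.U (2 * i.val + 1) a) := by
  have hH : ∀ i j, Sat M (hF i j) v ↔ ∀ x, Sat M (hG i j x) v := by
    intro i j
    simp only [hF, sat_conjL, List.mem_map, Finset.mem_toList, Finset.mem_univ, true_and,
      forall_exists_index, forall_apply_eq_imp_iff]
  have hV : ∀ i j, Sat M (vF i j) v ↔ ∀ x, Sat M (vG i j x) v := by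
    intro i j
    simp only [vF, sat_conjL, List.mem_map, Finset.mem_toList, Finset.mem_univ, true_and,
      forall_exists_index, forall_apply_eq_imp_iff]
  simp only [Sat, sat_al0, sat_orN, sat_andN, pairF]
  constructor
  · rintro ⟨h1, h2⟩
    refine ⟨fun a => ?_, ?_, ?_⟩
    · obtain ⟨i, hi, h⟩ := h1 a
      exact ⟨⟨i, hi⟩, h⟩
    · intro x s P B P' B' a b i j ha hab hb hi hj
      by_contra hc
      cases s with
      | true =>
        simp only [if_true] at hc
        have := (h2 i i.2 j j.2).1
        rw [if_neg (by rw [hh]; exact hc), hH] at this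
        have := this (x, true, P, B, P', B')
        simp only [hG, if_true] at this
        rw [sat_forb] at this
        exact this a ha hi b hab hb hj
      | false =>
        simp only [Bool.false_eq_true, if_false] at hc
        have := (h2 j j.2 i i.2).1
        rw [if_neg (by rw [hh]; exact hc), hH] at this
        have := this (x, false, P, B, P', B')
        simp only [hG, Bool.false_eq_true, if_false] at this
        rw [sat_forb] at this
        exact this a ha hi b hab hb hj
    · intro x s P B P' B' a b i j ha hab hb hi hj
      by_contra hc
      have := (h2 i i.2 j j.2).2
      rw [if_neg (by rw [hw]; exact hc), hV] at this
      have := this (x, s, P, B, P', B')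
      simp only [vG] at this
      rw [sat_forb] at this
      exact this a ha hi b hab hb hj
  · rintro ⟨h1, h2, h3⟩
    refine ⟨fun a => ?_, ?_⟩
    · obtain ⟨i, h⟩ := h1 a
      exact ⟨i, i.2, h⟩
    · intro i hi j hj
      constructor
      · split_ifs with hc
        · exact sat_tru M v
        · rw [hH]
          rintro ⟨x, s, P, B, P', B'⟩
          have hc' := mt (hh ⟨i, hi⟩ ⟨j, hj⟩).2 hc
          cases s with
          | true =>
            simp only [hG, if_true]
            rw [sat_forb]
            intro a ha hai b hab hb hbj
            exact hc' (h2 x true P B P' B' a b ⟨i, hi⟩ ⟨j, hj⟩ ha hab hb hai hbj)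
          | false =>
            simp only [hG, Bool.false_eq_true, if_false]
            rw [sat_forb]
            intro a ha hai b hab hb hbj
            exact hc' (h2 x false P B P' B' a b ⟨j, hj⟩ ⟨i, hi⟩ ha hab hb hai hbj)
      · split_ifs with hc
        · exact sat_tru M v
        · rw [hV]
          rintro ⟨x, s, P, B, P', B'⟩
          have hc' := mt (hw ⟨i, hi⟩ ⟨j, hj⟩).2 hc
          simp only [vG]
          rw [sat_forb]
          intro a ha hai b hab hb hbj
          exact hc' (h3 x s P B P' B' a b ⟨i, hi⟩ ⟨j, hj⟩ ha hab hb hai hbj)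

end sem

lemma eta_correct (T : TileSys) (h w : ℕ)
    (hh : ∀ i j : Fin T.n, h / 2 ^ (i.val * T.n + j.val) % 2 = 1 ↔ T.H i j = true)
    (hw : ∀ i j : Fin T.n, w / 2 ^ (i.val * T.n + j.val) % 2 = 1 ↔ T.V i j = true) :
    Satisfiable (eta T.n h w) ↔ T.TilesNat := by
  constructor
  · rintro ⟨A, _, M, hM, hs⟩
    have hs' := (show Sat M geoF _ ∧ Sat M _ _ from hs)
    exact sound T hM ((sat_geo M _).1 hs'.1) ((sat_tile M T h w hh hw _).1 hs'.2)
  · intro ht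
    obtain ⟨ρ, hρ⟩ := tiles_int T ht
    let M : Str (ℕ × ℕ) :=
      { U := fun p a => (∃ l, p = code l ∧ MP l a) ∨
          (∃ i : Fin T.n, p = 2 * i.val + 1 ∧ ρ (xp a.1 a.2 / 2) a.1 = i)
        T := MR }
    have e1 : (fun (l : Lb) a => M.U (code l) a) = MP := by
      funext l a
      apply propext
      constructor
      · rintro (⟨l', h, h'⟩ | ⟨i, h, _⟩)
        · rw [code_inj h]; exact h'
        · simp only [code] at h; omega
      · exact fun h => Or.inl ⟨l, rfl, h⟩
    have e2 : (fun (i : Fin T.n) a => M.U (2 * i.val + 1) a) =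
        fun i a => ρ (xp a.1 a.2 / 2) a.1 = i := by
      funext i a
      apply propext
      constructor
      · rintro (⟨l', h, h'⟩ | ⟨i', h, h'⟩)
        · simp only [code] at h; omega
        · rw [h']; apply Fin.ext; omega
      · exact fun h => Or.inr ⟨i, rfl, h⟩
    refine ⟨ℕ × ℕ, ⟨(0, 0)⟩, M, MR_trans, ?_⟩
    show Sat M geoF _ ∧ Sat M _ _
    constructor
    · rw [sat_geo, e1]; exact model_geo
    · rw [sat_tile M T h w hh hw, e1, e2]; exact model_tile T ρ hρ

/-! ### computability -/

lemma bits (n : ℕ) (H : Fin n → Fin n → Bool) (i j : Fin n) :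
    (∑ i : Fin n, ∑ j : Fin n, if H i j then 2 ^ (i.val * n + j.val) else 0) /
      2 ^ (i.val * n + j.val) % 2 = 1 ↔ H i j = true := by
  classical
  let φ : Fin n × Fin n → ℕ := fun p => p.1.val * n + p.2.val
  have hφ : Function.Injective φ := by
    rintro ⟨a, b⟩ ⟨c, d⟩ h
    have hn : 0 < n := a.pos
    simp only [φ] at h
    have h1 : (b.val + n * a.val) % n = (d.val + n * c.val) % n := by
      rw [show b.val + n * a.val = a.val * n + b.val by ring, h]; congr 1; ring
    rw [Nat.add_mul_mod_self_left, Nat.add_mul_mod_self_left, Nat.mod_eq_of_lt b.2,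
      Nat.mod_eq_of_lt d.2] at h1
    have h2 : a.val * n = c.val * n := by omega
    have h3 := Nat.eq_of_mul_eq_mul_right hn h2
    exact Prod.ext (Fin.ext h3) (Fin.ext h1)
  let S : Finset ℕ := (Finset.univ.filter (fun p : Fin n × Fin n => H p.1 p.2 = true)).image φ
  have hsum : (∑ i : Fin n, ∑ j : Fin n, if H i j then 2 ^ (i.val * n + j.val) else 0)
      = ∑ a ∈ S, 2 ^ a := by
    rw [Finset.sum_image (fun _ _ _ _ h => hφ h), Finset.sum_filter, ← Finset.univ_product_univ,
      Finset.sum_product]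
  have hS : (∑ a ∈ S, 2 ^ a).bitIndices.toFinset = S := by
    have := Finset.equivBitIndices.apply_symm_apply S
    exact this
  rw [hsum]
  have h1 : (∑ a ∈ S, 2 ^ a).testBit (φ (i, j)) = true ↔ φ (i, j) ∈ S := by
    have h2 : φ (i, j) ∈ S ↔ φ (i, j) ∈ (∑ a ∈ S, 2 ^ a).bitIndices.toFinset := by rw [hS]
    rw [h2, List.mem_toFinset]
    simp only [Nat.mem_bitIndices]
  rw [Nat.testBit_eq_decide_div_mod_eq, decide_eq_true_iff] at h1
  refine h1.trans ?_
  simp only [S, Finset.mem_image, Finset.mem_filter, Finset.mem_univ, true_and]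
  constructor
  · rintro ⟨p, hp, h⟩
    rw [hφ h] at hp; exact hp
  · intro h
    exact ⟨(i, j), h, rfl⟩

section prim
variable {α : Type} [Primcodable α]

lemma pr_pair {f g : α → ℕ} (hf : Primrec f) (hg : Primrec g) :
    Primrec fun a => Nat.pair (f a) (g a) := Primrec₂.natPair.comp hf hg

lemma pr_conjL {β : Type} (f : α → β → F 0) (l : List β)
    (hf : ∀ b, Primrec fun a => encode (f a b)) :
    Primrec fun a => encode (conjL (l.map (f a))) := by
  induction l with
  | nil => exact Primrec.const _
  | cons b l ih =>
    simp only [List.map, conjL, encode]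
    exact pr_pair (Primrec.const _) (pr_pair (hf b) ih)

lemma pr_andN (f : α → ℕ → F 0) (n : α → ℕ) (hn : Primrec n)
    (hf : Primrec fun p : α × ℕ => encode (f p.1 p.2)) :
    Primrec fun a => encode (andN (f a) (n a)) := by
  have h : Primrec fun a => (n a).rec (motive := fun _ => ℕ) (encode tru)
      fun m IH => Nat.pair 4 (Nat.pair IH (encode (f a m))) := by
    refine Primrec.nat_rec' (h := fun a (p : ℕ × ℕ) =>
      Nat.pair 4 (Nat.pair p.2 (encode (f a p.1)))) hn (Primrec.const _) ?_
    refine pr_pair (Primrec.const _) (pr_pair (Primrec.snd.comp Primrec.snd) ?_)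
    exact hf.comp (Primrec.pair Primrec.fst (Primrec.fst.comp Primrec.snd))
  refine h.of_eq fun a => ?_
  induction n a with
  | zero => rfl
  | succ m ih => simp only [andN, encode, ← ih]

lemma pr_tile {f : α → ℕ} (hf : Primrec f) : Primrec fun a => 2 * f a + 1 :=
  Primrec.succ.comp (Primrec.nat_mul.comp (Primrec.const 2) hf)

lemma pr_orN : Primrec fun n => encode (orN n) := by
  have h : Primrec fun n : ℕ => n.rec (motive := fun _ => ℕ) (encode (orN 0))
      fun m IH => Nat.pair 5 (Nat.pair IH (Nat.pair 0 (2 * m + 1))) := by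
    refine Primrec.nat_rec' (h := fun _ (p : ℕ × ℕ) =>
      Nat.pair 5 (Nat.pair p.2 (Nat.pair 0 (2 * p.1 + 1)))) Primrec.id (Primrec.const _) ?_
    refine pr_pair (Primrec.const _) (pr_pair (Primrec.snd.comp Primrec.snd)
      (pr_pair (Primrec.const _) (pr_tile (Primrec.fst.comp Primrec.snd))))
  refine h.of_eq fun a => ?_
  induction a with
  | zero => rfl
  | succ m ih => simp only [orN, encode, ← ih]

lemma pr_forb (l c l') {i j : α → ℕ} (hi : Primrec i) (hj : Primrec j) :
    Primrec fun a => encode (forb l c l' (i a) (j a)) := by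
  have c' : ∀ n : ℕ, Primrec fun _ : α => n := fun n => Primrec.const n
  simp only [forb, al0, al1, p1, p2, encode]
  exact pr_pair (c' _) (pr_pair (c' _) (pr_pair (c' _) (pr_pair (c' _) (pr_pair
    (pr_pair (c' _) (pr_tile hi)) (pr_pair (c' _) (pr_pair (c' _) (pr_pair (c' _)
      (pr_pair (c' _) (pr_pair (c' _) (pr_pair (c' _) (pr_pair (c' _) (pr_tile hj))))))))))))

lemma pr_hF {i j : α → ℕ} (hi : Primrec i) (hj : Primrec j) :
    Primrec fun a => encode (hF (i a) (j a)) := by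
  refine pr_conjL (fun a => hG (i a) (j a)) _ ?_
  rintro ⟨x, s, P, B, P', B'⟩
  cases s
  · exact pr_forb _ _ _ hj hi
  · exact pr_forb _ _ _ hi hj

lemma pr_vF {i j : α → ℕ} (hi : Primrec i) (hj : Primrec j) :
    Primrec fun a => encode (vF (i a) (j a)) := by
  refine pr_conjL (fun a => vG (i a) (j a)) _ ?_
  rintro ⟨x, s, P, B, P', B'⟩
  exact pr_forb _ _ _ hi hj

lemma pr_if {h e : α → ℕ} {f : α → F 0} (hh : Primrec h) (he : Primrec e)
    (hf : Primrec fun a => encode (f a)) :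
    Primrec fun a => encode (if h a / 2 ^ (e a) % 2 = 1 then tru else f a) := by
  have hpow : Primrec₂ ((· ^ ·) : ℕ → ℕ → ℕ) := Primrec₂.unpaired'.1 Nat.Primrec.pow
  have hc : PrimrecPred fun a => h a / 2 ^ (e a) % 2 = 1 :=
    Primrec.eq.comp (Primrec.nat_mod.comp (Primrec.nat_div.comp hh
      (hpow.comp (Primrec.const 2) he)) (Primrec.const 2)) (Primrec.const 1)
  refine (Primrec.ite hc (Primrec.const (encode tru)) hf).of_eq fun a => ?_
  split_ifs <;> rfl

lemma pr_pairF {n h v i j : α → ℕ} (hn : Primrec n) (hh : Primrec h) (hv : Primrec v)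
    (hi : Primrec i) (hj : Primrec j) :
    Primrec fun a => encode (pairF (n a) (h a) (v a) (i a) (j a)) := by
  have he : Primrec fun a => i a * n a + j a :=
    Primrec.nat_add.comp (Primrec.nat_mul.comp hi hn) hj
  simp only [pairF, encode]
  exact pr_pair (Primrec.const _) (pr_pair (pr_if hh he (pr_hF hi hj)) (pr_if hv he (pr_vF hi hj)))

lemma pr_eta {n h v : α → ℕ} (hn : Primrec n) (hh : Primrec h) (hv : Primrec v) :
    Primrec fun a => encode (eta (n a) (h a) (v a)) := by
  simp only [eta, al0, encode]
  refine pr_pair (Primrec.const _) (pr_pair (Primrec.const _) (pr_pair (Primrec.const _)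
    (pr_pair (pr_pair (Primrec.const _) (pr_orN.comp hn)) ?_)))
  refine pr_andN (fun a i => andN (fun j => pairF (n a) (h a) (v a) i j) (n a)) n hn ?_
  refine pr_andN (fun (p : α × ℕ) j => pairF (n p.1) (h p.1) (v p.1) p.2 j)
    (fun p => n p.1) (hn.comp Primrec.fst) ?_
  have hf : Primrec fun p : (α × ℕ) × ℕ => p.1.1 := Primrec.fst.comp Primrec.fst
  exact pr_pairF (hn.comp hf) (hh.comp hf) (hv.comp hf)
    (Primrec.snd.comp Primrec.fst) Primrec.snd

end prim

/-- the reduction in the proof of Theorem 7.  There is a computable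
map assigning to each tiling system `𝒞` a sentence `η_𝒞` of FL²3T such that `η_𝒞` is
satisfiable (in a structure where the three distinguished relations are transitive) if
and only if `𝒞` tiles `ℕ × ℕ`. -/
theorem tiling_reduction_to_flutedThreeTrans :
    ∃ g : ℕ → ℕ, Computable g ∧
      ∀ T : TileSys, ∃ η : F 0,
        g T.encode = encode η ∧ (Satisfiable η ↔ T.TilesNat) := by
  have hu : Primrec fun z : ℕ => z.unpair.2.unpair :=
    Primrec.unpair.comp (Primrec.snd.comp Primrec.unpair)
  refine ⟨fun z => encode (eta z.unpair.1 z.unpair.2.unpair.1 z.unpair.2.unpair.2),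
    (pr_eta (Primrec.fst.comp Primrec.unpair) (Primrec.fst.comp hu) (Primrec.snd.comp hu)).to_comp,
    fun T => ⟨_, rfl, ?_⟩⟩
  simp only [TileSys.encode, Nat.unpair_pair]
  exact eta_correct T _ _ (bits T.n T.H) (bits T.n T.V)

end FlutedThreeTrans
end

section
/- There is a sentence of FL²3T (the two-variable fluted fragment with three distinguished transitive relations, without equality) that is satisfiable in a structure where all three distinguished relations are transitive, but has no finite such model; that is, FL²3T admits axioms of infinity and does not have the finite model property. -/
/- STATEMENT 14: FL²3T admits axioms of infinity: some satisfiable sentence of the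
two-variable fluted fragment with three distinguished transitive relations has no
finite model; hence FL²3T lacks the finite model property. -/

namespace FlutedThreeTrans

/-- `φ` has a finite model in which all three distinguished binary relations are
transitive. -/
def FinitelySatisfiable (φ : F 0) : Prop :=
  ∃ (A : Type) (_ : Nonempty A) (_ : Finite A) (M : Str A),
    (∀ k, Transitive (M.T k)) ∧ Sat M φ (fun i => i.elim0)

/-- Unary atom number `k` at the last variable. -/
def pp (k : Fin 3) (m : ℕ) (h1 : 1 ≤ m) (h2 : m ≤ 2) : F m := .patom k.val h1 h2

/-- Every element of class `k` has a successor in class `k+1` and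
sees class `k+2` through relation 0 whenever it does through relation 1. -/
def ax (k : Fin 3) : F 1 :=
  .imp (pp k 1 (by omega) (by omega))
    (.and
      (.ex (by omega) (.and (pp (k+1) 2 (by omega) (by omega))
        (.and (.batom 1) (.not (.batom 0)))))
      (.all (by omega) (.imp (pp (k+2) 2 (by omega) (by omega))
        (.imp (.batom 1) (.batom 0)))))

def sentence : F 0 :=
  .and (.ex (by omega) (pp 0 1 (by omega) (by omega)))
    (.all (by omega) (.and (ax 0) (.and (ax 1) (ax 2))))

theorem sat_ax {A : Type} (M : Str A) (k : Fin 3) (v : Fin 0 → A) (a : A) :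
    Sat M (ax k) (Fin.snoc v a : Fin 1 → A) ↔ (M.U k.val a →
      (∃ b, M.U (k+1).val b ∧ M.T 1 a b ∧ ¬ M.T 0 a b) ∧
      (∀ b, M.U (k+2).val b → M.T 1 a b → M.T 0 a b)) := by
  have h0 : ∀ b : A, (Fin.snoc (Fin.snoc v a : Fin 1 → A) b : Fin 2 → A) 0 = a := fun b => rfl
  have h1 : ∀ b : A, (Fin.snoc (Fin.snoc v a : Fin 1 → A) b : Fin 2 → A) 1 = b := fun b => rfl
  exact Iff.rfl

theorem sat_sentence {A : Type} (M : Str A) (v : Fin 0 → A) :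
    Sat M sentence v ↔ (∃ a, M.U 0 a) ∧ ∀ (k : Fin 3) (a : A), (M.U k.val a →
      (∃ b, M.U (k+1).val b ∧ M.T 1 a b ∧ ¬ M.T 0 a b) ∧
      (∀ b, M.U (k+2).val b → M.T 1 a b → M.T 0 a b)) := by
  have h : Sat M sentence v ↔ (∃ a, M.U 0 a) ∧ ∀ a,
      Sat M (ax 0) (Fin.snoc v a : Fin 1 → A) ∧ Sat M (ax 1) (Fin.snoc v a : Fin 1 → A) ∧
      Sat M (ax 2) (Fin.snoc v a : Fin 1 → A) := Iff.rfl
  rw [h]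
  simp only [sat_ax]
  refine and_congr_right fun _ => ⟨fun H k a => ?_, fun H a => ⟨H 0 a, H 1 a, H 2 a⟩⟩
  fin_cases k
  · exact (H a).1
  · exact (H a).2.1
  · exact (H a).2.2

def natStr : Str ℕ where
  U p n := n % 3 = p
  T k i j := if k = 0 then i + 2 ≤ j else i < j

theorem sat_nat : Satisfiable sentence := by
  refine ⟨ℕ, ⟨0⟩, natStr, ?_, ?_⟩
  · intro k a b c h1 h2
    simp only [natStr] at *
    split_ifs at * <;> omega
  · rw [sat_sentence]
    refine ⟨⟨0, rfl⟩, fun k a hk => ⟨⟨a + 1, ?_⟩, fun b => ?_⟩⟩ <;>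
    fin_cases k <;> simp [natStr] at * <;> omega

theorem not_fin : ¬ FinitelySatisfiable sentence := by
  rintro ⟨A, _, _, M, hT, hS⟩
  rw [sat_sentence] at hS
  obtain ⟨⟨a0, ha0⟩, H⟩ := hS
  let S := {s : A × Fin 3 // M.U s.2.val s.1}
  have step : ∀ s : S, ∃ t : S, t.1.2 = s.1.2 + 1 ∧ M.T 1 s.1.1 t.1.1 ∧
      ¬ M.T 0 s.1.1 t.1.1 := by
    rintro ⟨⟨a, k⟩, h⟩
    obtain ⟨b, hb, h1, h2⟩ := (H k a h).1
    exact ⟨⟨⟨b, k+1⟩, hb⟩, rfl, h1, h2⟩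
  choose g hg using step
  let f : ℕ → S := fun n => g^[n] ⟨⟨a0, 0⟩, ha0⟩
  have fs : ∀ n, f (n+1) = g (f n) := fun n => Function.iterate_succ_apply' g n _
  have hlt : ∀ n d, M.T 1 (f n).1.1 (f (n+d+1)).1.1 := by
    intro n d
    induction d with
    | zero => rw [fs]; exact (hg _).2.1
    | succ d ih =>
      refine hT 1 ih ?_
      rw [show n + (d+1) + 1 = (n+d+1)+1 by omega, fs (n+d+1)]
      exact (hg _).2.1
  obtain ⟨a, b, hab, he⟩ : ∃ a b, a < b ∧ f a = f b := by
    obtain ⟨a, b, hne, he⟩ := Finite.exists_ne_map_eq_of_infinite f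
    rcases lt_or_gt_of_ne hne with h | h
    · exact ⟨a, b, h, he⟩
    · exact ⟨b, a, h, he.symm⟩
  obtain ⟨d, rfl⟩ : ∃ d, b = a + d + 1 := ⟨b - a - 1, by omega⟩
  have per : ∀ n, f (a + n) = f (a + n + (d + 1)) := by
    intro n
    induction n with
    | zero => exact he
    | succ n ih =>
      rw [show a + (n+1) + (d+1) = (a + n + (d+1)) + 1 by omega, ← add_assoc, fs, fs, ih]
  have e1 : f (a+1) = f (a + 2 + (2*d) + 1) := by
    rw [per 1, add_assoc a 1, per]
    congr 1
    omega
  have h21 : M.T 1 (f (a+2)).1.1 (f (a+1)).1.1 := by rw [e1]; exact hlt _ _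
  have h02 : M.T 1 (f a).1.1 (f (a+2)).1.1 := hlt a 1
  have k1 : (f (a+1)).1.2 = (f a).1.2 + 1 := by rw [fs]; exact (hg _).1
  have k2 : (f (a+2)).1.2 = (f a).1.2 + 2 := by
    rw [show a + 2 = (a+1)+1 from rfl, fs, (hg _).1, k1, add_assoc]; rfl
  have k3 : (f (a+1)).1.2 = (f (a+2)).1.2 + 2 := by
    rw [k1, k2]; generalize (f a).1.2 = k; revert k; decide
  have t02 := (H _ _ (f a).2).2 (f (a+2)).1.1 (by rw [← k2]; exact (f (a+2)).2) h02
  have t21 := (H _ _ (f (a+2)).2).2 (f (a+1)).1.1 (by rw [← k3]; exact (f (a+1)).2) h21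
  have hn : ¬ M.T 0 (f a).1.1 (f (a+1)).1.1 := by rw [fs]; exact (hg _).2.2
  exact hn (hT 0 t02 t21)

/-- There is a sentence of FL²3T that is satisfiable in a structure
where all three distinguished relations are transitive, but has no finite such model;
that is, FL²3T admits axioms of infinity and does not have the finite model
property. -/
theorem flutedThreeTrans_infinity_axiom :
    ∃ φ : F 0, Satisfiable φ ∧ ¬ FinitelySatisfiable φ := by
  exact ⟨sentence, sat_nat, not_fin⟩

end FlutedThreeTrans
end
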